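/- arXiv:1611.09067 — 4 statements merged into one kernel-verified Lean document; each statement's English description precedes it below -/
import Mathlib

section
/- Let α be a type and let S and S' be finite sets of pairs over α with |S| > 9 and |S'| > 9. Then every member of S meets every member of S' if and only if there exists an element a of α that belongs to every member of S and to every member of S'. (This is the combinatorial content of the key claim in the proof of Lemma A.1: 'if |S| > 9 the check can succeed iff all the multisets in S and in S' share a common element'.) -/
/-- Two multisets *meet* if they share a common element. -/
def Meets {α : Type*} (s t : Multiset α) : Prop := ∃ x, x ∈ s ∧ x ∈ t

/-!
Pairs through `x` that meet a multiset `t` avoiding `x` are of the form `{x, u}` with `u ∈ t`, so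
there are at most `card t` of them. If no element is common to all of `S'`, fix `t ∈ S'`: each
member of `S` passes through one of the two elements `x` of `t`, and, because some member of `S'`
avoids `x`, at most two members of `S` pass through each `x`; so `|S| ≤ 4`. Hence some `a` is common
to all of `S'`, and a member of `S` avoiding `a` would leave room for only two members of `S'`.
-/

section

variable {α : Type*} {S T : Set (Multiset α)}

theorem Meets.symm {s t : Multiset α} : Meets s t → Meets t s
  | ⟨x, hxs, hxt⟩ => ⟨x, hxt, hxs⟩

theorem eq_pair_of_mem_of_mem_of_card_le_two {s : Multiset α} {x y : α}
    (hs : Multiset.card s ≤ 2) (hxy : x ≠ y) (hx : x ∈ s) (hy : y ∈ s) : s = {x, y} := by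
  have hnodup : Multiset.Nodup {x, y} := by simpa using hxy
  have hle : {x, y} ≤ s :=
    (Multiset.le_iff_subset hnodup).2 (by simp [Multiset.cons_subset, hx, hy])
  exact (Multiset.eq_of_le_of_card_le hle (by simpa using hs)).symm

theorem encard_le_card_of_forall_mem_of_forall_meets {x : α} {t : Multiset α}
    (hS : ∀ s ∈ S, Multiset.card s ≤ 2) (hx : ∀ s ∈ S, x ∈ s) (hxt : x ∉ t)
    (hmeet : ∀ s ∈ S, Meets s t) : S.encard ≤ Multiset.card t := by
  classical
  have hsub : S ⊆ (fun u => ({x, u} : Multiset α)) '' (t.toFinset : Set α) := by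
    intro s hs
    obtain ⟨u, hus, hut⟩ := hmeet s hs
    have hxu : x ≠ u := fun h => hxt (h ▸ hut)
    exact ⟨u, by simpa using hut,
      (eq_pair_of_mem_of_mem_of_card_le_two (hS s hs) hxu (hx s hs) hus).symm⟩
  calc S.encard
      ≤ ((fun u => ({x, u} : Multiset α)) '' (t.toFinset : Set α)).encard :=
        Set.encard_le_encard hsub
    _ ≤ (t.toFinset : Set α).encard := Set.encard_image_le _ _
    _ = t.toFinset.card := Set.encard_coe_eq_coe_finsetCard _
    _ ≤ Multiset.card t := mod_cast t.toFinset_card_le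

theorem encard_le_mul_of_forall_meets_of_forall_exists_notMem {m : ℕ}
    (hS : ∀ s ∈ S, Multiset.card s ≤ 2) (hT : ∀ t ∈ T, Multiset.card t ≤ m) (hne : T.Nonempty)
    (hmeet : ∀ s ∈ S, ∀ t ∈ T, Meets s t) (hcommon : ∀ a, ∃ t ∈ T, a ∉ t) :
    S.encard ≤ m * m := by
  classical
  obtain ⟨t, ht⟩ := hne
  have hcover : S ⊆ ⋃ x ∈ t.toFinset, {s ∈ S | x ∈ s} := by
    intro s hs
    obtain ⟨x, hxs, hxt⟩ := hmeet s hs t ht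
    exact Set.mem_biUnion (by simpa using hxt) ⟨hs, hxs⟩
  have hstar (x : α) : {s ∈ S | x ∈ s}.encard ≤ m := by
    obtain ⟨t', ht', hxt'⟩ := hcommon x
    calc {s ∈ S | x ∈ s}.encard
        ≤ Multiset.card t' := encard_le_card_of_forall_mem_of_forall_meets
          (fun s hs => hS s hs.1) (fun s hs => hs.2) hxt' (fun s hs => hmeet s hs.1 t' ht')
      _ ≤ m := mod_cast hT t' ht'
  calc S.encard
      ≤ (⋃ x ∈ t.toFinset, {s ∈ S | x ∈ s}).encard := Set.encard_le_encard hcover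
    _ ≤ ∑ x ∈ t.toFinset, {s ∈ S | x ∈ s}.encard := Finset.set_encard_biUnion_le _ _
    _ ≤ t.toFinset.card • (m : ℕ∞) := Finset.sum_le_card_nsmul _ _ _ fun x _ => hstar x
    _ ≤ m * m := by
      rw [nsmul_eq_mul]
      gcongr
      exact t.toFinset_card_le.trans (hT t ht)

theorem cross_intersecting_iff_common_element_general
    (hS : ∀ s ∈ S, Multiset.card s ≤ 2) (hT : ∀ t ∈ T, Multiset.card t ≤ 2)
    (hScard : 4 < S.encard) (hTcard : 2 < T.encard) :
    (∀ s ∈ S, ∀ t ∈ T, Meets s t) ↔ ∃ a : α, (∀ s ∈ S, a ∈ s) ∧ (∀ t ∈ T, a ∈ t) := by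
  refine ⟨fun hmeet => ?_, fun ⟨a, haS, haT⟩ s hs t ht => ⟨a, haS s hs, haT t ht⟩⟩
  obtain ⟨a, haT⟩ : ∃ a, ∀ t ∈ T, a ∈ t := by
    by_contra! hcommon
    have hne : T.Nonempty := Set.encard_pos.1 (pos_of_gt hTcard)
    have hle := encard_le_mul_of_forall_meets_of_forall_exists_notMem hS hT hne hmeet hcommon
    exact hScard.not_ge (hle.trans (by norm_num))
  refine ⟨a, fun s hs => ?_, haT⟩
  by_contra has
  have hle : T.encard ≤ Multiset.card s :=
    encard_le_card_of_forall_mem_of_forall_meets hT haT has fun t ht => (hmeet s hs t ht).symm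
  exact hTcard.not_ge (hle.trans (mod_cast hS s hs))

end

/-- If `S` and `S'` are finite sets of pairs (multisets of cardinality 2) over `α`,
both of cardinality greater than 9, then every member of `S` meets every member of
`S'` iff there is a single element `a` belonging to every member of `S` and of `S'`. -/
theorem cross_intersecting_iff_common_element {α : Type*}
    (S S' : Finset (Multiset α))
    (hS : ∀ s ∈ S, Multiset.card s = 2)
    (hS' : ∀ t ∈ S', Multiset.card t = 2)
    (hcard : 9 < S.card) (hcard' : 9 < S'.card) :
    (∀ s ∈ S, ∀ t ∈ S', Meets s t) ↔
      ∃ a : α, (∀ s ∈ S, a ∈ s) ∧ (∀ t ∈ S', a ∈ t) :=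
  cross_intersecting_iff_common_element_general (S := S) (T := S')
    (fun s hs => (hS s hs).le) (fun t ht => (hS' t ht).le)
    (by rw [Set.encard_coe_eq_coe_finsetCard]; norm_cast; lia)
    (by rw [Set.encard_coe_eq_coe_finsetCard]; norm_cast; lia)
end

section
/- Let α be a type, let S and S' be finite sets of pairs over α with |S'| > 9, and let a, b, c, d be pairwise distinct elements of α with {a,b} ∈ S, {a,c} ∈ S and {a,d} ∈ S. If every member of S meets every member of S', then a belongs to every member of S and to every member of S'. (This is Case 1 of the proof of Lemma A.1: 'if {a,b}, {a,c}, and {a,d} belong to S then the check succeeds iff a belongs to all the multisets in S and in S''.) -/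
/-!
If a pair `t` in `S'` missed `a`, meeting `{a, b}`, `{a, c}` and `{a, d}` would force it to contain
the three distinct elements `b`, `c`, `d`. Hence every member of `S'` contains `a`. If now some `s`
in `S` missed `a`, then each member of `S'` would be `{a, x}` with `x ∈ s`, leaving at most
`|s| = 2` possibilities, fewer than `|S'|`.
-/

section

variable {α : Type*} {a : α} {s t : Multiset α}

theorem meets_pair_left {b : α} : Meets {a, b} t ↔ a ∈ t ∨ b ∈ t := by
  simp [Meets]

theorem mem_of_forall_meets_pair {B : Finset α} (hcard : t.card < B.card)
    (hmeet : ∀ b ∈ B, Meets {a, b} t) : a ∈ t := by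
  by_contra hat
  have hBt : B.val ⊆ t := fun b hb => (meets_pair_left.1 (hmeet b hb)).resolve_left hat
  exact hcard.not_ge (Multiset.card_le_card ((Multiset.le_iff_subset B.nodup).2 hBt))

theorem eq_pair_of_mem_of_mem_of_card_le_two_s3 {x : α} (hax : a ≠ x) (ha : a ∈ t)
    (hx : x ∈ t) (hcard : t.card ≤ 2) : t = {a, x} := by
  have hsub : ({a, x} : Multiset α) ⊆ t := by
    simp [Multiset.insert_eq_cons, Multiset.cons_subset, ha, hx]
  have hle : {a, x} ≤ t := (Multiset.le_iff_subset (by simpa using hax)).2 hsub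
  exact (Multiset.eq_of_le_of_card_le hle (by simpa using hcard)).symm

theorem encard_setOf_mem_le_card (s : Multiset α) : {x | x ∈ s}.encard ≤ s.card := by
  classical
  calc {x | x ∈ s}.encard = (s.toFinset : Set α).encard := by congr 1; ext; simp
    _ = s.toFinset.card := Set.encard_coe_eq_coe_finsetCard _
    _ ≤ s.card := by exact_mod_cast s.toFinset_card_le

theorem encard_le_card_of_notMem_of_forall_meets {T : Set (Multiset α)} (has : a ∉ s)
    (hT : ∀ t ∈ T, t.card ≤ 2) (haT : ∀ t ∈ T, a ∈ t) (hmeet : ∀ t ∈ T, Meets s t) :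
    T.encard ≤ s.card := by
  have hsub : T ⊆ (fun x => ({a, x} : Multiset α)) '' {x | x ∈ s} := by
    intro t ht
    obtain ⟨x, hxs, hxt⟩ := hmeet t ht
    have hax : a ≠ x := fun h => has (h ▸ hxs)
    exact ⟨x, hxs, (eq_pair_of_mem_of_mem_of_card_le_two_s3 hax (haT t ht) hxt (hT t ht)).symm⟩
  exact (Set.encard_le_encard hsub).trans
    ((Set.encard_image_le _ _).trans (encard_setOf_mem_le_card s))

end

theorem common_element_of_three_pairs_general {α : Type*} {S S' : Set (Multiset α)}
    (hS : ∀ s ∈ S, s.card < S'.encard) (hS' : ∀ t ∈ S', t.card ≤ 2) {a b c d : α}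
    (hbc : b ≠ c) (hbd : b ≠ d) (hcd : c ≠ d)
    (hab : {a, b} ∈ S) (hac : {a, c} ∈ S) (had : {a, d} ∈ S)
    (hmeet : ∀ s ∈ S, ∀ t ∈ S', Meets s t) :
    (∀ s ∈ S, a ∈ s) ∧ (∀ t ∈ S', a ∈ t) := by
  classical
  have hleaves : ({b, c, d} : Finset α).card = 3 :=
    Finset.card_eq_three.2 ⟨b, c, d, hbc, hbd, hcd, rfl⟩
  have hstar : ∀ x ∈ ({b, c, d} : Finset α), {a, x} ∈ S := by
    simpa only [Finset.mem_insert, Finset.mem_singleton, forall_eq_or_imp, forall_eq]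
      using ⟨hab, hac, had⟩
  have haS' : ∀ t ∈ S', a ∈ t := fun t ht =>
    mem_of_forall_meets_pair (hleaves ▸ Nat.lt_succ_of_le (hS' t ht))
      fun x hx => hmeet _ (hstar x hx) t ht
  refine ⟨fun s hs => ?_, haS'⟩
  by_contra has
  exact (hS s hs).not_ge (encard_le_card_of_notMem_of_forall_meets has hS' haS' (hmeet s hs))

/-- Case 1 of the proof of Lemma A.1: if `S` contains the pairs `{a,b}`, `{a,c}`,
`{a,d}` for pairwise distinct `a,b,c,d`, `|S'| > 9`, and every member of `S`
meets every member of `S'`, then `a` belongs to every member of `S` and of `S'`. -/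
theorem common_element_of_three_pairs {α : Type*}
    (S S' : Finset (Multiset α))
    (hS : ∀ s ∈ S, Multiset.card s = 2)
    (hS' : ∀ t ∈ S', Multiset.card t = 2)
    (hcard' : 9 < S'.card)
    (a b c d : α)
    (hab : a ≠ b) (hac : a ≠ c) (had : a ≠ d)
    (hbc : b ≠ c) (hbd : b ≠ d) (hcd : c ≠ d)
    (h1 : ({a, b} : Multiset α) ∈ S)
    (h2 : ({a, c} : Multiset α) ∈ S)
    (h3 : ({a, d} : Multiset α) ∈ S)
    (hmeet : ∀ s ∈ S, ∀ t ∈ S', Meets s t) :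
    (∀ s ∈ S, a ∈ s) ∧ (∀ t ∈ S', a ∈ t) := by
  have hlt : ((2 : ℕ) : ℕ∞) < (S' : Set (Multiset α)).encard := by simpa using by omega
  exact common_element_of_three_pairs_general (fun s hs => (hS s hs).symm ▸ hlt)
    (fun t ht => (hS' t ht).le) hbc hbd hcd h1 h2 h3 hmeet
end

section
/- Let α be a type and let S be a finite set of pairs over α with |S| > 9. Then at least one of the following four patterns occurs in S: (1) there exist pairwise distinct a, b, c, d in α such that {a,b}, {a,c}, {a,d} ∈ S; (2) there exist pairwise distinct a, b, c, d in α such that {a,b}, {c,d} ∈ S; (3) there exist pairwise distinct a, b, c in α such that {a,a}, {b,c} ∈ S; (4) there exist distinct a, b in α such that {a,a}, {b,b} ∈ S. (This is the exhaustiveness claim 'the following cases cover all the possibilities' in the proof of Lemma A.1.) -/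
/-!
If two pairs of `S` are disjoint, they give one of the patterns (2), (3), (4), according to which
of them are of the form `{a, a}`. If any two pairs of `S` meet, then either all of them share an
element `a` or they are among the three sides of a triangle. More than three pairs do not fit in a
triangle, and in the star at least three of them differ from `{a, a}`, which is pattern (1).
-/

section

variable {α : Type*} {S : Set (Multiset α)}

theorem exists_eq_pair_of_mem_of_card_eq_two {s : Multiset α} {a : α} (ha : a ∈ s)
    (hs : Multiset.card s = 2) : ∃ b, s = {a, b} := by
  obtain ⟨t, rfl⟩ := Multiset.exists_cons_of_mem ha
  obtain ⟨b, rfl⟩ := Multiset.card_eq_one.mp (by simpa using hs)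
  exact ⟨b, rfl⟩

theorem eq_pair_of_mem_of_mem_of_card_eq_two {s : Multiset α} {a b : α} (ha : a ∈ s) (hb : b ∈ s)
    (hab : a ≠ b) (hs : Multiset.card s = 2) : s = {a, b} := by
  obtain ⟨c, rfl⟩ := exists_eq_pair_of_mem_of_card_eq_two ha hs
  obtain rfl : b = c := by simpa [hab.symm] using hb
  rfl

theorem not_disjoint_pair_left {a b : α} {s : Multiset α} :
    ¬ Disjoint {a, b} s ↔ a ∈ s ∨ b ∈ s := by
  simp [or_iff_not_imp_left]

theorem mem_triangle_of_not_disjoint {s : Multiset α} {a b c : α} (hs : Multiset.card s = 2)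
    (hab : a ≠ b) (hac : a ≠ c) (hbc : b ≠ c) (hsab : ¬ Disjoint {a, b} s)
    (hsac : ¬ Disjoint {a, c} s) (hsbc : ¬ Disjoint {b, c} s) :
    s ∈ ({{a, b}, {a, c}, {b, c}} : Set (Multiset α)) := by
  rw [not_disjoint_pair_left] at hsab hsac hsbc
  have htwo : (a ∈ s ∧ b ∈ s) ∨ (a ∈ s ∧ c ∈ s) ∨ (b ∈ s ∧ c ∈ s) := by tauto
  rcases htwo with ⟨ha, hb⟩ | ⟨ha, hc⟩ | ⟨hb, hc⟩
  · exact .inl (eq_pair_of_mem_of_mem_of_card_eq_two ha hb hab hs)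
  · exact .inr (.inl (eq_pair_of_mem_of_mem_of_card_eq_two ha hc hac hs))
  · exact .inr (.inr (eq_pair_of_mem_of_mem_of_card_eq_two hb hc hbc hs))

theorem exists_forall_mem_or_subset_triangle (hS : ∀ s ∈ S, Multiset.card s = 2)
    (hne : S.Nonempty) (hmeet : ∀ s ∈ S, ∀ t ∈ S, ¬ Disjoint s t) :
    (∃ a, ∀ s ∈ S, a ∈ s) ∨ ∃ a b c : α, S ⊆ {{a, b}, {a, c}, {b, c}} := by
  refine or_iff_not_imp_left.mpr fun hstar ↦ ?_
  have hmiss (x : α) : ∃ s ∈ S, x ∉ s := by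
    by_contra! hx
    exact hstar ⟨x, hx⟩
  have mem_or_mem {x y : α} {s : Multiset α} (hxy : {x, y} ∈ S) (hs : s ∈ S) : x ∈ s ∨ y ∈ s :=
    not_disjoint_pair_left.mp (hmeet _ hxy s hs)
  obtain ⟨s, hab⟩ := hne
  obtain ⟨a, b, rfl⟩ := Multiset.card_eq_two.mp (hS s hab)
  obtain ⟨t, hbc, hat⟩ := hmiss a
  have hbt : b ∈ t := (mem_or_mem hab hbc).resolve_left hat
  obtain ⟨c, rfl⟩ := exists_eq_pair_of_mem_of_card_eq_two hbt (hS t hbc)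
  obtain ⟨hne_ab, hne_ac⟩ : a ≠ b ∧ a ≠ c := by simpa using hat
  obtain ⟨u, hac, hbu⟩ := hmiss b
  have hau : a ∈ u := (mem_or_mem hab hac).resolve_right hbu
  have hcu : c ∈ u := (mem_or_mem hbc hac).resolve_left hbu
  have hne_bc : b ≠ c := fun h ↦ hbu (h ▸ hcu)
  obtain rfl := eq_pair_of_mem_of_mem_of_card_eq_two hau hcu hne_ac (hS u hac)
  exact ⟨a, b, c, fun s hs ↦ mem_triangle_of_not_disjoint (hS s hs) hne_ab hne_ac hne_bc
    (hmeet _ hab s hs) (hmeet _ hac s hs) (hmeet _ hbc s hs)⟩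

theorem encard_triple_le_three {β : Type*} (x y z : β) : ({x, y, z} : Set β).encard ≤ 3 :=
  calc
    ({x, y, z} : Set β).encard ≤ ({y, z} : Set β).encard + 1 := Set.encard_insert_le _ _
    _ ≤ ({z} : Set β).encard + 1 + 1 := by gcongr; exact Set.encard_insert_le _ _
    _ = 3 := by rw [Set.encard_singleton]; norm_num

theorem exists_three_pairs_of_forall_mem {a : α} (hS : ∀ s ∈ S, Multiset.card s = 2)
    (hstar : ∀ s ∈ S, a ∈ s) (hcard : 3 < S.encard) :
    ∃ b c d : α, a ≠ b ∧ a ≠ c ∧ a ≠ d ∧ b ≠ c ∧ b ≠ d ∧ c ≠ d ∧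
      {a, b} ∈ S ∧ {a, c} ∈ S ∧ {a, d} ∈ S := by
  have hthree : 3 ≤ (S \ {{a, a}}).encard := by
    apply Order.le_of_lt_add_one
    calc
      3 < S.encard := hcard
      _ ≤ (S \ {{a, a}}).encard + ({{a, a}} : Set (Multiset α)).encard :=
        Set.encard_le_encard_sdiff_add_encard S {{a, a}}
      _ = (S \ {{a, a}}).encard + 1 := by rw [Set.encard_singleton]
  obtain ⟨T, hTS, hT⟩ := Set.exists_subset_encard_eq hthree
  obtain ⟨s, t, u, hst, hsu, htu, rfl⟩ := Set.encard_eq_three.mp hT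
  have exists_ne_eq_pair {v : Multiset α} (hv : v ∈ S \ {{a, a}}) : ∃ x, a ≠ x ∧ v = {a, x} := by
    obtain ⟨x, rfl⟩ := exists_eq_pair_of_mem_of_card_eq_two (hstar v hv.1) (hS v hv.1)
    exact ⟨x, fun hax ↦ hv.2 (by simp [hax]), rfl⟩
  have hs := hTS (show s ∈ {s, t, u} by simp)
  have ht := hTS (show t ∈ {s, t, u} by simp)
  have hu := hTS (show u ∈ {s, t, u} by simp)
  obtain ⟨b, hab, rfl⟩ := exists_ne_eq_pair hs
  obtain ⟨c, hac, rfl⟩ := exists_ne_eq_pair ht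
  obtain ⟨d, had, rfl⟩ := exists_ne_eq_pair hu
  exact ⟨b, c, d, hab, hac, had, by rintro rfl; exact hst rfl, by rintro rfl; exact hsu rfl,
    by rintro rfl; exact htu rfl, hs.1, ht.1, hu.1⟩

theorem exists_pairs_of_disjoint {s t : Multiset α} (hs : s ∈ S) (ht : t ∈ S)
    (hs₂ : Multiset.card s = 2) (ht₂ : Multiset.card t = 2) (hst : Disjoint s t) :
    (∃ a b c d : α, a ≠ b ∧ a ≠ c ∧ a ≠ d ∧ b ≠ c ∧ b ≠ d ∧ c ≠ d ∧ {a, b} ∈ S ∧ {c, d} ∈ S) ∨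
    (∃ a b c : α, a ≠ b ∧ a ≠ c ∧ b ≠ c ∧ {a, a} ∈ S ∧ {b, c} ∈ S) ∨
    (∃ a b : α, a ≠ b ∧ {a, a} ∈ S ∧ {b, b} ∈ S) := by
  obtain ⟨a, b, rfl⟩ := Multiset.card_eq_two.mp hs₂
  obtain ⟨c, d, rfl⟩ := Multiset.card_eq_two.mp ht₂
  obtain ⟨⟨hac, had⟩, hbc, hbd⟩ : (a ≠ c ∧ a ≠ d) ∧ b ≠ c ∧ b ≠ d := by
    simpa [Multiset.disjoint_left] using hst
  rcases eq_or_ne a b with rfl | hab <;> rcases eq_or_ne c d with rfl | hcd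
  · exact .inr (.inr ⟨a, c, hac, hs, ht⟩)
  · exact .inr (.inl ⟨a, c, d, hac, had, hcd, hs, ht⟩)
  · exact .inr (.inl ⟨c, a, b, hac.symm, hbc.symm, hab, ht, hs⟩)
  · exact .inl ⟨a, b, c, d, hab, hac, had, hbc, hbd, hcd, hs, ht⟩

theorem case_analysis_exhaustive_general (hS : ∀ s ∈ S, Multiset.card s = 2)
    (hcard : 3 < S.encard) :
    (∃ a b c d : α, a ≠ b ∧ a ≠ c ∧ a ≠ d ∧ b ≠ c ∧ b ≠ d ∧ c ≠ d ∧
      {a, b} ∈ S ∧ {a, c} ∈ S ∧ {a, d} ∈ S) ∨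
    (∃ a b c d : α, a ≠ b ∧ a ≠ c ∧ a ≠ d ∧ b ≠ c ∧ b ≠ d ∧ c ≠ d ∧ {a, b} ∈ S ∧ {c, d} ∈ S) ∨
    (∃ a b c : α, a ≠ b ∧ a ≠ c ∧ b ≠ c ∧ {a, a} ∈ S ∧ {b, c} ∈ S) ∨
    (∃ a b : α, a ≠ b ∧ {a, a} ∈ S ∧ {b, b} ∈ S) := by
  by_cases hmeet : ∀ s ∈ S, ∀ t ∈ S, ¬ Disjoint s t
  · have hne : S.Nonempty := Set.encard_pos.mp (pos_of_gt hcard)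
    obtain ⟨a, hstar⟩ | ⟨a, b, c, htriangle⟩ := exists_forall_mem_or_subset_triangle hS hne hmeet
    · exact .inl ⟨a, exists_three_pairs_of_forall_mem hS hstar hcard⟩
    · have hle : S.encard ≤ 3 :=
        (Set.encard_le_encard htriangle).trans (encard_triple_le_three _ _ _)
      exact absurd hcard hle.not_gt
  · push Not at hmeet
    obtain ⟨s, hs, t, ht, hst⟩ := hmeet
    exact .inr (exists_pairs_of_disjoint hs ht (hS s hs) (hS t ht) hst)

end

/-- Exhaustiveness of the case analysis in the proof of Lemma A.1: a finite set
`S` of pairs (multisets of cardinality 2) with `|S| > 9` contains one of four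
patterns. -/
theorem case_analysis_exhaustive {α : Type*}
    (S : Finset (Multiset α))
    (hS : ∀ s ∈ S, Multiset.card s = 2)
    (hcard : 9 < S.card) :
    (∃ a b c d : α, a ≠ b ∧ a ≠ c ∧ a ≠ d ∧ b ≠ c ∧ b ≠ d ∧ c ≠ d ∧
      ({a, b} : Multiset α) ∈ S ∧ ({a, c} : Multiset α) ∈ S ∧
      ({a, d} : Multiset α) ∈ S) ∨
    (∃ a b c d : α, a ≠ b ∧ a ≠ c ∧ a ≠ d ∧ b ≠ c ∧ b ≠ d ∧ c ≠ d ∧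
      ({a, b} : Multiset α) ∈ S ∧ ({c, d} : Multiset α) ∈ S) ∨
    (∃ a b c : α, a ≠ b ∧ a ≠ c ∧ b ≠ c ∧
      ({a, a} : Multiset α) ∈ S ∧ ({b, c} : Multiset α) ∈ S) ∨
    (∃ a b : α, a ≠ b ∧
      ({a, a} : Multiset α) ∈ S ∧ ({b, b} : Multiset α) ∈ S) := by
  have hcard' : 3 < S.card := by lia
  exact case_analysis_exhaustive_general (S := (S : Set (Multiset α))) hS (mod_cast hcard')
end

section
/- Let L, A, B be types, let T₁ : A → L → A → Prop and T₂ : B → L → B → Prop be labelled transition relations, let H : Set L be a set of hidden labels, and assume that every T₁-transition whose label lies in H has label τ, for a fixed distinguished label τ ∈ H. Suppose R : A → B → Prop is a weak system bisimulation, i.e. for all a, b with R a b: (i) whenever T₁ a μ a', there exists a finite sequence of T₂-transitions starting from b, all with labels in H, reaching some state from which a T₂-transition with label μ leads to some b' with R a' b'; and (ii) whenever T₂ b η b', either there exists a' with T₁ a η a' and R a' b', or η ∈ H and R a b'. Define a finite weak trace of a state to be any list of labels obtained from the label sequence of a finite transition sequence starting at that state by removing all labels belonging to H. Then for all a, b with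 R a b, the states a (with respect to T₁) and b (with respect to T₂) have exactly the same finite weak traces: a list w of labels is a finite weak trace of a if and only if it is a finite weak trace of b. (This is the abstract content of Lemma 4.3 of the paper: weak system bisimilarity of a DIOC system and a DPOC system implies their weak trace equivalence; the coinductive proof given there is independent of the particular DIOC/DPOC transition systems.) -/
open scoped Classical

/-- `Steps T s w s'`: a finite transition sequence of the labelled transition
relation `T` from state `s` to state `s'` with label sequence `w`. -/
inductive Steps {St L : Type*} (T : St → L → St → Prop) : St → List L → St → Prop
  | nil (s : St) : Steps T s [] s
  | cons {s s' s'' : St} {μ : L} {w : List L} :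
      T s μ s' → Steps T s' w s'' → Steps T s (μ :: w) s''

/-- `WeakTrace T H s w`: the list `w` is a finite weak trace of state `s`,
i.e. `w` is obtained from the label sequence of some finite transition sequence
starting at `s` by removing all labels belonging to the set `H` of hidden labels. -/
def WeakTrace {St L : Type*} (T : St → L → St → Prop) (H : Set L)
    (s : St) (w : List L) : Prop :=
  ∃ (tr : List L) (s' : St), Steps T s tr s' ∧
    w = tr.filter (fun l => decide (l ∉ H))

/-!
A weak system bisimulation is a weak simulation in both directions: each transition is answered by a
finite, possibly empty, transition sequence that shows the same visible labels. Concatenating the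
answers along a transition sequence preserves the visible labels, so weak traces are matched.
-/

section WeakSimulation

variable {L A B : Type*} {T₁ : A → L → A → Prop} {T₂ : B → L → B → Prop} {H : Set L}
  {R : A → B → Prop}

theorem Steps.single {a a' : A} {μ : L} (h : T₁ a μ a') : Steps T₁ a [μ] a' :=
  .cons h (.nil a')

theorem Steps.append {a a' a'' : A} {u v : List L} (hu : Steps T₁ a u a')
    (hv : Steps T₁ a' v a'') : Steps T₁ a (u ++ v) a'' := by
  induction hu with
  | nil => exact hv
  | cons hstep _ ih => exact .cons hstep (ih hv)

/-- The visible part of a label sequence: the labels outside the set `H` of hidden labels, in order.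
The filter is written as in `WeakTrace`, so that the two agree definitionally. -/
noncomputable def visible (H : Set L) (w : List L) : List L :=
  w.filter (fun l => decide (l ∉ H))

theorem visible_append (u v : List L) : visible H (u ++ v) = visible H u ++ visible H v :=
  List.filter_append u v

theorem visible_cons (μ : L) (w : List L) : visible H (μ :: w) = visible H [μ] ++ visible H w :=
  visible_append [μ] w

theorem visible_eq_nil_iff {w : List L} : visible H w = [] ↔ ∀ l ∈ w, l ∈ H := by
  simp [visible, List.filter_eq_nil_iff]

/-- `R` is a weak simulation of `T₁` by `T₂`: every `T₁`-transition is answered by a finite sequence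
of `T₂`-transitions with the same visible labels. The sequence may be empty when the label is
hidden, which covers both clauses of a weak system bisimulation. -/
def IsWeakSimulation (T₁ : A → L → A → Prop) (T₂ : B → L → B → Prop) (H : Set L)
    (R : A → B → Prop) : Prop :=
  ∀ ⦃a : A⦄ ⦃b : B⦄, R a b → ∀ ⦃μ : L⦄ ⦃a' : A⦄, T₁ a μ a' →
    ∃ (v : List L) (b' : B), Steps T₂ b v b' ∧ visible H v = visible H [μ] ∧ R a' b'

theorem IsWeakSimulation.exists_steps (hsim : IsWeakSimulation T₁ T₂ H R) {a a' : A} {b : B}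
    {w : List L} (hab : R a b) (hw : Steps T₁ a w a') :
    ∃ (v : List L) (b' : B), Steps T₂ b v b' ∧ visible H v = visible H w ∧ R a' b' := by
  induction hw generalizing b with
  | nil => exact ⟨[], b, .nil b, rfl, hab⟩
  | @cons _ _ _ μ w hstep _ ih =>
    obtain ⟨u, b₁, hu, hu_vis, hab₁⟩ := hsim hab hstep
    obtain ⟨v, b', hv, hv_vis, hab'⟩ := ih hab₁
    refine ⟨u ++ v, b', hu.append hv, ?_, hab'⟩
    rw [visible_append, hu_vis, hv_vis, ← visible_cons]

theorem IsWeakSimulation.weakTrace (hsim : IsWeakSimulation T₁ T₂ H R) {a : A} {b : B}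
    (hab : R a b) {w : List L} : WeakTrace T₁ H a w → WeakTrace T₂ H b w := by
  rintro ⟨u, a', hu, rfl⟩
  obtain ⟨v, b', hv, hv_vis, -⟩ := hsim.exists_steps hab hu
  exact ⟨v, b', hv, hv_vis.symm⟩

/-- Weak system bisimulations (Definition 4.1 of the paper) for an arbitrary set `H` of hidden
labels, common to both systems. The clauses are asymmetric: `T₂` may precede its answer by hidden
transitions, whereas `T₁` answers by a single transition or, to a hidden label, by none. -/
structure IsWeakSystemBisimulation (T₁ : A → L → A → Prop) (T₂ : B → L → B → Prop) (H : Set L)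
    (R : A → B → Prop) : Prop where
  forward : ∀ (a : A) (b : B), R a b → ∀ (μ : L) (a' : A), T₁ a μ a' →
    ∃ (w : List L) (b₁ b' : B),
      Steps T₂ b w b₁ ∧ (∀ l ∈ w, l ∈ H) ∧ T₂ b₁ μ b' ∧ R a' b'
  backward : ∀ (a : A) (b : B), R a b → ∀ (η : L) (b' : B), T₂ b η b' →
    (∃ a' : A, T₁ a η a' ∧ R a' b') ∨ (η ∈ H ∧ R a b')

namespace IsWeakSystemBisimulation

theorem isWeakSimulation (hbisim : IsWeakSystemBisimulation T₁ T₂ H R) :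
    IsWeakSimulation T₁ T₂ H R := by
  intro a b hab μ a' hstep
  obtain ⟨w, b₁, b', hw, hw_hidden, hstep', hab'⟩ := hbisim.forward a b hab μ a' hstep
  refine ⟨w ++ [μ], b', hw.append (.single hstep'), ?_, hab'⟩
  rw [visible_append, visible_eq_nil_iff.mpr hw_hidden, List.nil_append]

theorem isWeakSimulation_flip (hbisim : IsWeakSystemBisimulation T₁ T₂ H R) :
    IsWeakSimulation T₂ T₁ H (flip R) := by
  intro b a hab η b' hstep
  rcases hbisim.backward a b hab η b' hstep with ⟨a', hstep', hab'⟩ | ⟨hη, hab'⟩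
  · exact ⟨[η], a', .single hstep', rfl, hab'⟩
  · exact ⟨[], a, .nil a, (visible_eq_nil_iff.mpr (List.forall_mem_singleton.mpr hη)).symm, hab'⟩

end IsWeakSystemBisimulation

theorem weak_system_bisimulation_implies_weak_trace_equivalence_general
    (hbisim : IsWeakSystemBisimulation T₁ T₂ H R) {a : A} {b : B} (hab : R a b) (w : List L) :
    WeakTrace T₁ H a w ↔ WeakTrace T₂ H b w :=
  ⟨hbisim.isWeakSimulation.weakTrace hab, hbisim.isWeakSimulation_flip.weakTrace hab⟩

end WeakSimulation

/-- Abstract content of Lemma 4.3: a weak system bisimulation between two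
labelled transition systems implies equality of the sets of finite weak traces
of related states. -/
theorem weak_system_bisimulation_implies_weak_trace_equivalence
    {L A B : Type*}
    (T₁ : A → L → A → Prop) (T₂ : B → L → B → Prop)
    (H : Set L) (τ : L) (hτ : τ ∈ H)
    (hsilent : ∀ (a : A) (l : L) (a' : A), T₁ a l a' → l ∈ H → l = τ)
    (R : A → B → Prop)
    (hbisim₁ : ∀ (a : A) (b : B), R a b → ∀ (μ : L) (a' : A), T₁ a μ a' →
      ∃ (w : List L) (b₁ b' : B),
        Steps T₂ b w b₁ ∧ (∀ l ∈ w, l ∈ H) ∧ T₂ b₁ μ b' ∧ R a' b')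
    (hbisim₂ : ∀ (a : A) (b : B), R a b → ∀ (η : L) (b' : B), T₂ b η b' →
      (∃ a' : A, T₁ a η a' ∧ R a' b') ∨ (η ∈ H ∧ R a b')) :
    ∀ (a : A) (b : B), R a b →
      ∀ w : List L, WeakTrace T₁ H a w ↔ WeakTrace T₂ H b w :=
  fun _ _ hab w =>
    weak_system_bisimulation_implies_weak_trace_equivalence_general ⟨hbisim₁, hbisim₂⟩ hab w
end
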